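/- Let M be a reduced G_C-perfect R-module of G_C-dimension n, and assume Tor_1^R(Tr(M), C) = 0. Then G_C-dim_R(M) + G_C-dim_R(λM ⊗_R C) = G_C-dim_R(Ext_R^n(M,C)) (as an equality in ℕ ∪ {∞}). -/

import Mathlib

open CategoryTheory TensorProduct

noncomputable section

universe u

variable (R : Type u) [CommRing R]

/-- The `i`-th Ext module `Ext_R^i(M, N)`. -/
def ExtM (M N : ModuleCat.{u} R) (i : ℕ) : ModuleCat.{u} R :=
  ((Ext R (ModuleCat.{u} R) i).obj (Opposite.op M)).obj N

/-- The `i`-th Tor module `Tor_i^R(M, N)`. -/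
def TorM (M N : ModuleCat.{u} R) (i : ℕ) : ModuleCat.{u} R :=
  ((Tor (ModuleCat.{u} R) i).obj M).obj N

/-- The biduality (evaluation) map `M → Hom_R(Hom_R(M, C), C)`. -/
def bidualityMap (C M : ModuleCat.{u} R) :
    ↥M →ₗ[R] ((↥M →ₗ[R] ↥C) →ₗ[R] ↥C) :=
  (LinearMap.id : (↥M →ₗ[R] ↥C) →ₗ[R] (↥M →ₗ[R] ↥C)).flip

/-- `C` is a semidualizing `R`-module. -/
def IsSemidualizing (C : ModuleCat.{u} R) : Prop :=
  Module.Finite R ↥C ∧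
  Function.Bijective (fun r : R => (r • LinearMap.id : ↥C →ₗ[R] ↥C)) ∧
  ∀ i : ℕ, 0 < i → Subsingleton (ExtM R C C i)

/-- `M` is totally `C`-reflexive. -/
def IsTotallyCReflexive (C M : ModuleCat.{u} R) : Prop :=
  Module.Finite R ↥M ∧
  Function.Bijective (bidualityMap R C M) ∧
  (∀ i : ℕ, 0 < i → Subsingleton (ExtM R M C i)) ∧
  (∀ i : ℕ, 0 < i → Subsingleton (ExtM R (ModuleCat.of R (↥M →ₗ[R] ↥C)) C i))

/-- `G_C`-dimension of `M` is at most `n`: there is an exact sequence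
`0 → X_n → ⋯ → X_0 → M → 0` with each `X_i` totally `C`-reflexive. -/
def gcdimLE (C : ModuleCat.{u} R) : ℕ → ModuleCat.{u} R → Prop
  | 0, M => IsTotallyCReflexive R C M
  | n+1, M => ∃ (X K : ModuleCat.{u} R) (f : ↥K →ₗ[R] ↥X) (g : ↥X →ₗ[R] ↥M),
      Function.Injective f ∧ Function.Surjective g ∧
      LinearMap.ker g = LinearMap.range f ∧
      IsTotallyCReflexive R C X ∧ gcdimLE C n K

/-- The `G_C`-dimension of `M`, as an element of `ℕ∞`. -/
def gcdim (C M : ModuleCat.{u} R) : ℕ∞ :=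
  sInf ((fun n : ℕ => (n : ℕ∞)) '' {n | gcdimLE R C n M})

/-- `grade_R(M) = inf { i | Ext_R^i(M, R) ≠ 0 }`, with `grade 0 = ∞`. -/
def gradeR (M : ModuleCat.{u} R) : ℕ∞ :=
  sInf ((fun i : ℕ => (i : ℕ∞)) ''
    {i | ¬ Subsingleton (ExtM R M (ModuleCat.of R R) i)})

/-- Reduced grade of `M` with respect to `C`. -/
def rgrade (C M : ModuleCat.{u} R) : ℕ∞ :=
  sInf ((fun i : ℕ => (i : ℕ∞)) ''
    {i | 0 < i ∧ ¬ Subsingleton (ExtM R M C i)})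

/-- `M` is reduced `G_C`-perfect. -/
def IsReducedGCPerfect (C M : ModuleCat.{u} R) : Prop :=
  gcdim R C M ≠ ⊤ ∧ rgrade R C M = gcdim R C M

/-- `M` is `G_C`-perfect. -/
def IsGCPerfect (C M : ModuleCat.{u} R) : Prop :=
  gcdim R C M ≠ ⊤ ∧ gradeR R M = gcdim R C M

/-- `π : P → M` is a projective cover: `P` projective, `π` surjective with superfluous kernel. -/
def IsProjectiveCover {P M : ModuleCat.{u} R} (π : ↥P →ₗ[R] ↥M) : Prop :=
  Module.Projective R ↥P ∧ Function.Surjective π ∧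
  ∀ N : Submodule R ↥P, N ⊔ LinearMap.ker π = ⊤ → N = ⊤

/-- `P₁ →d P₀ →π M → 0` is a minimal projective presentation of `M`. -/
def IsMinimalPresentation {P1 P0 M : ModuleCat.{u} R}
    (d : ↥P1 →ₗ[R] ↥P0) (π : ↥P0 →ₗ[R] ↥M) : Prop :=
  Module.Finite R ↥P1 ∧ Module.Finite R ↥P0 ∧
  IsProjectiveCover R π ∧
  LinearMap.range d = LinearMap.ker π ∧
  Module.Projective R ↥P1 ∧
  ∀ N : Submodule R ↥P1, N ⊔ LinearMap.ker d = ⊤ → N = ⊤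

/-- `T` is (a module isomorphic to) the transpose `Tr_C(M)` of `M` with respect to `C`,
computed from a minimal projective presentation of `M`. -/
def IsTransposeC (C M T : ModuleCat.{u} R) : Prop :=
  ∃ (P1 P0 : ModuleCat.{u} R) (d : ↥P1 →ₗ[R] ↥P0) (π : ↥P0 →ₗ[R] ↥M),
    IsMinimalPresentation R d π ∧
    Nonempty (↥T ≃ₗ[R]
      ((↥P1 →ₗ[R] ↥C) ⧸ LinearMap.range (LinearMap.lcomp R ↥C d)))

/-- `T` is the usual Auslander transpose `Tr(M) = Tr_R(M)`. -/
def IsTranspose (M T : ModuleCat.{u} R) : Prop :=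
  IsTransposeC R (ModuleCat.of R R) M T

/-- `S` is (a module isomorphic to) the first syzygy `Ω N`, i.e. the kernel of a
projective cover of `N`. -/
def IsSyzygyOf (N S : ModuleCat.{u} R) : Prop :=
  ∃ (P : ModuleCat.{u} R) (π : ↥P →ₗ[R] ↥N),
    Module.Finite R ↥P ∧ IsProjectiveCover R π ∧
    Nonempty (↥S ≃ₗ[R] LinearMap.ker π)

/-- `S` is (a module isomorphic to) the `n`-th syzygy `Ωⁿ M`. -/
def IsNthSyzygy : ℕ → ModuleCat.{u} R → ModuleCat.{u} R → Prop
  | 0, M, S => Nonempty (↥S ≃ₗ[R] ↥M)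
  | n+1, M, S => ∃ K : ModuleCat.{u} R, IsNthSyzygy n M K ∧ IsSyzygyOf R K S

/-- `L` is (a module isomorphic to) `λ M = Ω Tr M`. -/
def IsLambda (M L : ModuleCat.{u} R) : Prop :=
  ∃ T : ModuleCat.{u} R, IsTranspose R M T ∧ IsSyzygyOf R T L

/-- `M` is horizontally linked, i.e. `M ≅ λλM`. -/
def IsHorizontallyLinked (M : ModuleCat.{u} R) : Prop :=
  ∃ L L2 : ModuleCat.{u} R, IsLambda R M L ∧ IsLambda R L L2 ∧
    Nonempty (↥M ≃ₗ[R] ↥L2)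

/-- `M` is stable: it has no non-zero projective direct summand. -/
def IsStable (M : ModuleCat.{u} R) : Prop :=
  ∀ (P N : ModuleCat.{u} R), Module.Projective R ↥P →
    Nonempty (↥M ≃ₗ[R] (↥P × ↥N)) → Subsingleton ↥P

/-- `N` belongs to the Auslander class `A_C`. -/
def MemAuslanderClass (C N : ModuleCat.{u} R) : Prop :=
  Function.Bijective (TensorProduct.mk R ↥N ↥C) ∧
  (∀ i : ℕ, 0 < i → Subsingleton (TorM R C N i)) ∧
  (∀ i : ℕ, 0 < i → Subsingleton
    (ExtM R C (ModuleCat.of R (↥N ⊗[R] ↥C)) i))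

/-- `R` is semiperfect: every finite `R`-module has a projective cover. -/
def IsSemiperfectRing : Prop :=
  ∀ M : ModuleCat.{u} R, Module.Finite R ↥M →
    ∃ (P : ModuleCat.{u} R) (π : ↥P →ₗ[R] ↥M),
      Module.Finite R ↥P ∧ IsProjectiveCover R π

/-- Depth over a local ring, via Ext from the residue field. -/
def rdepth [IsLocalRing R] (M : ModuleCat.{u} R) : ℕ∞ :=
  sInf ((fun i : ℕ => (i : ℕ∞)) ''
    {i | ¬ Subsingleton
      (ExtM R (ModuleCat.of R (IsLocalRing.ResidueField R)) M i)})

/-- Projective dimension at most `n`. -/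
def pdimLE : ℕ → ModuleCat.{u} R → Prop
  | 0, M => Module.Projective R ↥M
  | n+1, M => ∃ (X K : ModuleCat.{u} R) (f : ↥K →ₗ[R] ↥X) (g : ↥X →ₗ[R] ↥M),
      Function.Injective f ∧ Function.Surjective g ∧
      LinearMap.ker g = LinearMap.range f ∧
      Module.Projective R ↥X ∧ pdimLE n K

/-- Projective dimension, as an element of `ℕ∞`. -/
def pdim (M : ModuleCat.{u} R) : ℕ∞ :=
  sInf ((fun n : ℕ => (n : ℕ∞)) '' {n | pdimLE R n M})

/-- `M` is `C`-`k`-torsionless. -/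
def IsCkTorsionless (C M : ModuleCat.{u} R) (k : ℕ) : Prop :=
  k = 0 ∨ ∀ T : ModuleCat.{u} R, IsTransposeC R C M T →
    ∀ i : ℕ, 1 ≤ i → i ≤ k → Subsingleton (ExtM R T C i)

/-- `M` is a `C`-syzygy: it embeds into `P ⊗_R C` with `P` finite projective. -/
def IsCSyzygy (C M : ModuleCat.{u} R) : Prop :=
  ∃ (P : ModuleCat.{u} R), Module.Finite R ↥P ∧ Module.Projective R ↥P ∧
    ∃ f : ↥M →ₗ[R] (↥P ⊗[R] ↥C), Function.Injective f


/-- There is an exact sequence `0 → N → X_k → ⋯ → X_1 → M → 0` of finite `R`-modules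
with `Ext_R^i(X_j, C) = 0` for all `i > 0` and all `j`. -/
def ExtVanishingChain (C : ModuleCat.{u} R) : ℕ → ModuleCat.{u} R → ModuleCat.{u} R → Prop
  | 0, N, M => Nonempty (↥N ≃ₗ[R] ↥M)
  | k+1, N, M => ∃ (X K : ModuleCat.{u} R) (f : ↥K →ₗ[R] ↥X) (g : ↥X →ₗ[R] ↥M),
      Function.Injective f ∧ Function.Surjective g ∧
      LinearMap.ker g = LinearMap.range f ∧
      Module.Finite R ↥X ∧ (∀ i : ℕ, 0 < i → Subsingleton (ExtM R X C i)) ∧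
      ExtVanishingChain C k N K

/-!
Let `0 → K → P → M → 0` be exact with `P` totally `C`-reflexive, and let `N` be the cokernel of
`M^C → P^C`. If `Extⁱ(M, C) = 0` for `0 < i < n`, `Extⁿ(M, C) ≠ 0` and `G_C-dim M ≤ n`, then
`G_C-dim Extⁿ(M, C) = n + G_C-dim N`, by induction on `n`.

* For `n = 1`, `K` is totally `C`-reflexive and `0 → N → K^C → Ext¹(M, C) → 0` is exact. The map
  `K → P` is injective on biduals, so the `C`-dual of `Ext¹(M, C)` vanishes; being nonzero,
  `Ext¹(M, C)` is not totally `C`-reflexive, and its dimension is one more than that of `N`.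
* For `n > 1`, `N ≅ K^C` because `Ext¹(M, C) = 0`, and `Extⁿ(M, C) ≅ Extⁿ⁻¹(K, C)`. If `F → K`
  is a free cover and `N'` is the cokernel of `K^C → F^C`, then `N'` is not totally `C`-reflexive,
  as otherwise `K` would be; hence the dimension of `N'` is one more than that of `K^C`.

For a presentation `P₁ → P₀ → M → 0`, `N` is the image of `P₀^C → P₁^C`, whose cokernel is
`Tr M ⊗ C`. Since `Tor₁(Tr M, C) = 0`, tensoring `0 → λM → Q → Tr M → 0` with `C` gives a second
such description of `Tr M ⊗ C`, and a Schanuel argument shows that `N` and `λM ⊗ C` have the same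
`G_C`-dimension.
-/

section ShortExact

variable {R : Type*} [CommRing R] {A B D E : Type*}
  [AddCommGroup A] [AddCommGroup B] [AddCommGroup D] [AddCommGroup E]
  [Module R A] [Module R B] [Module R D] [Module R E]

/-- The sequence `0 → A → B → D → 0` of `R`-modules with maps `f` and `g` is exact. This
elementwise form applies to unbundled modules such as kernels, products and tensor products. -/
structure IsShortExact (f : A →ₗ[R] B) (g : B →ₗ[R] D) : Prop where
  injective : Function.Injective f
  exact : Function.Exact f g
  surjective : Function.Surjective g

namespace IsShortExact

variable {f : A →ₗ[R] B} {g : B →ₗ[R] D}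

theorem ker_subtype (hg : Function.Surjective g) : IsShortExact (LinearMap.ker g).subtype g :=
  ⟨Subtype.val_injective, g.exact_subtype_ker_map, hg⟩

theorem range_subtype (h : Function.Exact f g) (hg : Function.Surjective g) :
    IsShortExact (LinearMap.range f).subtype g where
  injective := Subtype.val_injective
  exact := LinearMap.exact_iff.2 (by rw [Submodule.range_subtype, h.linearMap_ker_eq])
  surjective := hg

theorem coker (hf : Function.Injective f) : IsShortExact f (LinearMap.range f).mkQ :=
  ⟨hf, f.exact_map_mkQ_range, Submodule.mkQ_surjective _⟩

theorem rangeRestrict (hf : Function.Injective f) (h : Function.Exact f g) :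
    IsShortExact f g.rangeRestrict where
  injective := hf
  exact := LinearMap.exact_iff.2 (by rw [LinearMap.ker_rangeRestrict, h.linearMap_ker_eq])
  surjective := g.surjective_rangeRestrict

theorem inl_snd : IsShortExact (LinearMap.inl R A B) (LinearMap.snd R A B) :=
  ⟨LinearMap.inl_injective, Function.Exact.inl_snd, LinearMap.snd_surjective⟩

theorem inl_comp_prodMap (h : IsShortExact f g) :
    IsShortExact (LinearMap.inl R B E ∘ₗ f) (g.prodMap (LinearMap.id : E →ₗ[R] E)) where
  injective := LinearMap.inl_injective.comp h.injective
  exact := by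
    rintro ⟨b, e⟩
    have : (∃ a, f a = b ∧ e = 0) ↔ g b = 0 ∧ e = 0 := by
      rw [exists_and_right]; exact and_congr_left fun _ => (h.exact b).symm
    simpa [Prod.ext_iff, eq_comm] using this.symm
  surjective := h.surjective.prodMap Function.surjective_id

theorem comp_linearEquiv (h : IsShortExact f g) (e : E ≃ₗ[R] A) :
    IsShortExact (f ∘ₗ e.toLinearMap) g where
  injective := h.injective.comp e.injective
  exact := LinearMap.exact_iff.2 (by
    rw [LinearEquiv.range_comp, h.exact.linearMap_ker_eq])
  surjective := h.surjective

theorem linearEquiv_comp (h : IsShortExact f g) (e : D ≃ₗ[R] E) :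
    IsShortExact f (e.toLinearMap ∘ₗ g) where
  injective := h.injective
  exact := LinearMap.exact_iff.2 (by
    rw [LinearEquiv.ker_comp, h.exact.linearMap_ker_eq])
  surjective := e.surjective.comp h.surjective

theorem finite_mid (h : IsShortExact f g) [Module.Finite R A] [Module.Finite R D] :
    Module.Finite R B :=
  have : Module.Finite R (B ⧸ LinearMap.range f) :=
    .equiv (h.exact.linearEquivOfSurjective h.surjective).symm
  .of_submodule_quotient (LinearMap.range f)

theorem nonempty_linearEquiv_coker {g' : B →ₗ[R] E} (h : IsShortExact f g)
    (h' : IsShortExact f g') : Nonempty (D ≃ₗ[R] E) :=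
  ⟨(h.exact.linearEquivOfSurjective h.surjective).symm ≪≫ₗ
    h'.exact.linearEquivOfSurjective h'.surjective⟩

theorem nonempty_linearEquiv_prod (h : IsShortExact f g) [Module.Projective R D] :
    Nonempty (B ≃ₗ[R] A × D) :=
  have ⟨s, hs⟩ := g.exists_rightInverse_of_surjective (LinearMap.range_eq_top.2 h.surjective)
  ⟨(h.exact.splitSurjectiveEquiv h.injective ⟨s, hs⟩).1⟩

theorem bijective_mid {A' B' D' : Type*} [AddCommGroup A'] [AddCommGroup B'] [AddCommGroup D']
    [Module R A'] [Module R B'] [Module R D'] {f' : A' →ₗ[R] B'} {g' : B' →ₗ[R] D'}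
    {α : A →ₗ[R] A'} {β : B →ₗ[R] B'} {γ : D →ₗ[R] D'} (h : IsShortExact f g)
    (h' : IsShortExact f' g') (hf : f' ∘ₗ α = β ∘ₗ f) (hg : g' ∘ₗ β = γ ∘ₗ g)
    (hα : Function.Bijective α) (hγ : Function.Bijective γ) : Function.Bijective β :=
  LinearMap.bijective_of_surjective_of_bijective_of_bijective_of_injective
    (0 : Unit →ₗ[R] A) f g (0 : D →ₗ[R] Unit) (0 : Unit →ₗ[R] A') f' g' (0 : D' →ₗ[R] Unit)
    LinearMap.id α β γ LinearMap.id (by simp) hf hg (by simp)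
    ((LinearMap.exact_zero_iff_injective _ f).2 h.injective) h.exact
    ((LinearMap.exact_zero_iff_surjective _ g).2 h.surjective)
    ((LinearMap.exact_zero_iff_injective _ f').2 h'.injective) h'.exact
    ((LinearMap.exact_zero_iff_surjective _ g').2 h'.surjective)
    Function.surjective_id hα hγ Function.injective_id

theorem exists_pullback {A' B' : Type*} [AddCommGroup A'] [AddCommGroup B'] [Module R A']
    [Module R B'] {f' : A' →ₗ[R] B'} {g' : B' →ₗ[R] D} (h : IsShortExact f g)
    (h' : IsShortExact f' g') :
    ∃ (Y : Submodule R (B × B')) (a : A →ₗ[R] Y) (a' : A' →ₗ[R] Y),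
      IsShortExact a (LinearMap.snd R B B' ∘ₗ Y.subtype) ∧
      IsShortExact a' (LinearMap.fst R B B' ∘ₗ Y.subtype) := by
  refine ⟨LinearMap.eqLocus (g ∘ₗ LinearMap.fst R B B') (g' ∘ₗ LinearMap.snd R B B'),
    (LinearMap.inl R B B' ∘ₗ f).codRestrict _ fun a => ?_,
    (LinearMap.inr R B B' ∘ₗ f').codRestrict _ fun a => ?_, ⟨?_, ?_, ?_⟩, ⟨?_, ?_, ?_⟩⟩
  · simp [h.exact.apply_apply_eq_zero]
  · simp [h'.exact.apply_apply_eq_zero]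
  · exact fun x y hxy => h.injective (congrArg (fun y => y.1.1) hxy)
  · rintro ⟨⟨b, b'⟩, hb : g b = g' b'⟩
    refine ⟨fun (hb' : b' = 0) => ?_, fun ⟨a, ha⟩ => (congrArg (fun y => y.1.2) ha).symm⟩
    obtain ⟨a, rfl⟩ := (h.exact b).1 (by rw [hb, hb', map_zero])
    exact ⟨a, Subtype.ext (Prod.ext rfl hb'.symm)⟩
  · intro b'
    obtain ⟨b, hb⟩ := h.surjective (g' b')
    exact ⟨⟨(b, b'), hb⟩, rfl⟩
  · exact fun x y hxy => h'.injective (congrArg (fun y => y.1.2) hxy)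
  · rintro ⟨⟨b, b'⟩, hb : g b = g' b'⟩
    refine ⟨fun (hb' : b = 0) => ?_, fun ⟨a, ha⟩ => (congrArg (fun y => y.1.1) ha).symm⟩
    obtain ⟨a, rfl⟩ := (h'.exact b').1 (by rw [← hb, hb', map_zero])
    exact ⟨a, Subtype.ext (Prod.ext hb'.symm rfl)⟩
  · intro b
    obtain ⟨b', hb⟩ := h'.surjective (g b)
    exact ⟨⟨(b, b'), hb.symm⟩, rfl⟩

theorem exists_ker_comp {K X : Type*} [AddCommGroup K] [AddCommGroup X] [Module R K] [Module R X]
    {i : K →ₗ[R] X} {p : X →ₗ[R] B} (hp : IsShortExact i p) (h : IsShortExact f g) :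
    ∃ (i' : K →ₗ[R] LinearMap.ker (g ∘ₗ p)) (p' : LinearMap.ker (g ∘ₗ p) →ₗ[R] A),
      IsShortExact i' p' := by
  let toRange : LinearMap.ker (g ∘ₗ p) →ₗ[R] LinearMap.range f :=
    (p ∘ₗ Submodule.subtype _).codRestrict _ fun x => (h.exact (p x)).1 x.2
  refine ⟨i.codRestrict _ fun k => ?_,
    (LinearEquiv.ofInjective f h.injective).symm.toLinearMap ∘ₗ toRange, ?_, ?_, ?_⟩
  · simp [hp.exact.apply_apply_eq_zero]
  · exact fun x y hxy => hp.injective (congrArg Subtype.val hxy)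
  · intro x
    have hx : toRange x = 0 ↔ p x = 0 := Subtype.ext_iff
    rw [LinearMap.comp_apply, LinearEquiv.coe_coe, LinearEquiv.map_eq_zero_iff, hx, hp.exact]
    simp only [Set.mem_range, Subtype.ext_iff, LinearMap.codRestrict_apply]
  · refine (LinearEquiv.symm _).surjective.comp ?_
    rintro ⟨b, hb⟩
    obtain ⟨x, rfl⟩ := hp.surjective b
    exact ⟨⟨x, (h.exact (p x)).2 hb⟩, rfl⟩

end IsShortExact

end ShortExact

section Ext

variable {R : Type u} [CommRing R] {A B D : Type u}
  [AddCommGroup A] [AddCommGroup B] [AddCommGroup D] [Module R A] [Module R B] [Module R D]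
  {C : ModuleCat.{u} R} {f : A →ₗ[R] B} {g : B →ₗ[R] D} {i : ℕ}

theorem exists_linearMap_cycles_ext {M : ModuleCat.{u} R} (P : ProjectiveResolution M)
    (N : ModuleCat.{u} R) (i : ℕ) :
    let S := (P.complex.linearYonedaObj R N).sc' i (i + 1) (i + 2)
    ∃ φ : LinearMap.ker S.g.hom →ₗ[R] Abelian.Ext M N (i + 1),
      Function.Surjective φ ∧ LinearMap.range S.moduleCatToCycles = LinearMap.ker φ := by
  intro S
  let hom (x : LinearMap.ker S.g.hom) : P.complex.X (i + 1) ⟶ N := x.1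
  have d_comp_hom (x) : P.complex.d (i + 2) (i + 1) ≫ hom x = 0 := x.2
  let φ : LinearMap.ker S.g.hom →ₗ[R] Abelian.Ext M N (i + 1) :=
    { toFun := fun x => P.extMk (hom x) (i + 2) rfl (d_comp_hom x)
      map_add' := fun _ _ => (P.add_extMk ..).symm
      map_smul' := fun r x => by
        rw [RingHom.id_apply, Abelian.Ext.smul_eq_comp_mk₀, P.extMk_comp_mk₀]
        congr 1 }
  refine ⟨φ, fun a => ?_, ?_⟩
  · obtain ⟨f, hf, h⟩ := P.extMk_surjective a (i + 2) rfl
    exact ⟨⟨f, hf⟩, h⟩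
  · ext x
    refine Iff.trans ?_ (P.extMk_eq_zero_iff _ _ rfl (d_comp_hom x) i rfl).symm
    exact ⟨fun ⟨g, hg⟩ => ⟨g, congrArg Subtype.val hg⟩, fun ⟨g, hg⟩ => ⟨g, Subtype.ext hg⟩⟩

theorem nonempty_extM_linearEquiv (M N : ModuleCat.{u} R) (hi : 0 < i) :
    Nonempty (ExtM R M N i ≃ₗ[R] Abelian.Ext M N i) := by
  obtain ⟨i, rfl⟩ := Nat.exists_eq_add_one.2 hi
  let P := ProjectiveResolution.of M
  let K := P.complex.linearYonedaObj R N
  let S := K.sc' i (i + 1) (i + 2)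
  let toHomology : ExtM R M N (i + 1) ≅ K.homology (i + 1) := P.isoExt (i + 1) N
  let toShort : K.homology (i + 1) ≅ S.homology :=
    ShortComplex.homologyMapIso (K.isoSc' i (i + 1) (i + 2) (by simp) (by simp))
  obtain ⟨φ, hφ, hker⟩ := exists_linearMap_cycles_ext P N i
  exact ⟨(toHomology ≪≫ toShort ≪≫ S.moduleCatHomologyIso).toLinearEquiv ≪≫ₗ
    Submodule.quotEquivOfEq _ _ hker ≪≫ₗ φ.quotKerEquivOfSurjective hφ⟩

theorem subsingleton_extM_iff {M N : ModuleCat.{u} R} (hi : 0 < i) :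
    Subsingleton (ExtM R M N i) ↔ Subsingleton (Abelian.Ext M N i) :=
  have ⟨e⟩ := nonempty_extM_linearEquiv M N hi
  e.toEquiv.subsingleton_congr

theorem subsingleton_extM_of_projective (M N : ModuleCat.{u} R) [Module.Projective R M]
    (hi : 0 < i) : Subsingleton (ExtM R M N i) := by
  have : Projective M := (IsProjective.iff_projective M).1 inferInstance
  obtain ⟨i, rfl⟩ := Nat.exists_eq_add_one.2 hi
  exact (subsingleton_extM_iff hi).2 (subsingleton_of_forall_eq 0 (·.eq_zero_of_projective))

theorem subsingleton_extM_of_retract {s : A →ₗ[R] B} {r : B →ₗ[R] A}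
    (h : r ∘ₗ s = LinearMap.id) (hB : Subsingleton (ExtM R (.of R B) C i)) :
    Subsingleton (ExtM R (.of R A) C i) := by
  let F := (Ext R (ModuleCat.{u} R) i).flip.obj C
  have hF : F.map (ModuleCat.ofHom r).op ≫ F.map (ModuleCat.ofHom s).op = 𝟙 _ := by
    rw [← F.map_comp, ← op_comp, ← ModuleCat.ofHom_comp, h, ModuleCat.ofHom_id, op_id, F.map_id]
  have hinj : Function.Injective (F.map (ModuleCat.ofHom r).op) :=
    Function.LeftInverse.injective (g := F.map (ModuleCat.ofHom s).op)
      (ConcreteCategory.congr_hom hF)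
  have : Subsingleton (F.obj (Opposite.op (.of R B))) := hB
  exact hinj.subsingleton

theorem subsingleton_extM_of_linearEquiv (e : A ≃ₗ[R] B)
    (hB : Subsingleton (ExtM R (.of R B) C i)) : Subsingleton (ExtM R (.of R A) C i) :=
  subsingleton_extM_of_retract e.symm_comp hB

namespace IsShortExact

theorem shortComplex_shortExact (h : IsShortExact f g) :
    (ShortComplex.mk (ModuleCat.ofHom f) (ModuleCat.ofHom g)
      (ModuleCat.hom_ext h.exact.linearMap_comp_eq_zero)).ShortExact :=
  .mk' ((ShortComplex.ShortExact.moduleCat_exact_iff_function_exact _).2 h.exact)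
    ((ModuleCat.mono_iff_injective _).2 h.injective)
    ((ModuleCat.epi_iff_surjective _).2 h.surjective)

theorem subsingleton_extM_mid (h : IsShortExact f g) (hi : 0 < i)
    (hA : Subsingleton (ExtM R (.of R A) C i)) (hD : Subsingleton (ExtM R (.of R D) C i)) :
    Subsingleton (ExtM R (.of R B) C i) := by
  rw [subsingleton_extM_iff hi] at *
  refine subsingleton_of_forall_eq 0 fun x => ?_
  obtain ⟨y, rfl⟩ := Abelian.Ext.contravariant_sequence_exact₂ h.shortComplex_shortExact C x
    (hA.elim _ _)
  rw [hD.elim y 0, Abelian.Ext.comp_zero]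

/-- The connecting homomorphism `Extⁱ(A, C) → Extⁱ⁺¹(D, C)` of a short exact sequence
`0 → A → B → D → 0`, on Mathlib's `Abelian.Ext`, where the long exact sequence is available. -/
def extConnecting (h : IsShortExact f g) (C : ModuleCat.{u} R) (i : ℕ) :
    Abelian.Ext (.of R A) C i →ₗ[R] Abelian.Ext (.of R D) C (i + 1) :=
  Abelian.Ext.bilinearCompOfLinear R _ _ C 1 i (i + 1) (add_comm 1 i)
    h.shortComplex_shortExact.extClass

theorem extConnecting_injective (h : IsShortExact f g)
    (hB : Subsingleton (Abelian.Ext (.of R B) C i)) :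
    Function.Injective (h.extConnecting C i) := by
  refine LinearMap.ker_eq_bot.1 (LinearMap.ker_eq_bot'.2 fun x hx => ?_)
  obtain ⟨y, rfl⟩ := Abelian.Ext.contravariant_sequence_exact₁ h.shortComplex_shortExact C x
    (add_comm 1 i) hx
  rw [hB.elim y 0, Abelian.Ext.comp_zero]

theorem extConnecting_surjective (h : IsShortExact f g)
    (hB : Subsingleton (Abelian.Ext (.of R B) C (i + 1))) :
    Function.Surjective (h.extConnecting C i) := fun x =>
  Abelian.Ext.contravariant_sequence_exact₃ h.shortComplex_shortExact C x (hB.elim _ _)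
    (add_comm 1 i)

theorem extConnecting_mk₀_eq_zero_iff (h : IsShortExact f g) (q : A →ₗ[R] C) :
    h.extConnecting C 0 (Abelian.Ext.mk₀ (ModuleCat.ofHom q)) = 0 ↔
      q ∈ Set.range (LinearMap.lcomp R C f) := by
  constructor
  · intro hq
    obtain ⟨y, hy⟩ := Abelian.Ext.contravariant_sequence_exact₁ h.shortComplex_shortExact C _
      (add_comm 1 0) hq
    obtain ⟨y, rfl⟩ := (Abelian.Ext.mk₀_bijective _ _).2 y
    rw [Abelian.Ext.mk₀_comp_mk₀] at hy
    exact ⟨y.hom, congrArg ModuleCat.Hom.hom ((Abelian.Ext.mk₀_bijective _ _).1 hy)⟩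
  · rintro ⟨y, rfl⟩
    have hfac : Abelian.Ext.mk₀ (ModuleCat.ofHom (LinearMap.lcomp R C f y)) =
        (Abelian.Ext.mk₀ (ModuleCat.ofHom f)).comp (Abelian.Ext.mk₀ (ModuleCat.ofHom y))
          (add_zero 0) := (Abelian.Ext.mk₀_comp_mk₀ _ _).symm
    rw [hfac]
    exact h.shortComplex_shortExact.extClass_comp_assoc _ (h := add_comm 1 0)

theorem exists_connecting_extM (h : IsShortExact f g) (C : ModuleCat.{u} R) (hi : 0 < i) :
    ∃ δ : ExtM R (.of R A) C i →ₗ[R] ExtM R (.of R D) C (i + 1),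
      (Subsingleton (ExtM R (.of R B) C i) → Function.Injective δ) ∧
      (Subsingleton (ExtM R (.of R B) C (i + 1)) → Function.Surjective δ) := by
  obtain ⟨eA⟩ := nonempty_extM_linearEquiv (.of R A) C hi
  obtain ⟨eD⟩ := nonempty_extM_linearEquiv (.of R D) C i.succ_pos
  refine ⟨eD.symm.toLinearMap ∘ₗ h.extConnecting C i ∘ₗ eA.toLinearMap, fun hB => ?_, fun hB => ?_⟩
  · rw [subsingleton_extM_iff hi] at hB
    exact eD.symm.injective.comp ((h.extConnecting_injective hB).comp eA.injective)
  · rw [subsingleton_extM_iff i.succ_pos] at hB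
    exact eD.symm.surjective.comp ((h.extConnecting_surjective hB).comp eA.surjective)

theorem exists_connecting_hom (h : IsShortExact f g) (C : ModuleCat.{u} R) :
    ∃ δ : (A →ₗ[R] C) →ₗ[R] ExtM R (.of R D) C 1,
      Function.Exact (LinearMap.lcomp R C f) δ ∧
      (Subsingleton (ExtM R (.of R B) C 1) → Function.Surjective δ) := by
  obtain ⟨eD⟩ := nonempty_extM_linearEquiv (.of R D) C one_pos
  let eA : (A →ₗ[R] C) ≃ₗ[R] Abelian.Ext (.of R A) C 0 :=
    (ModuleCat.homLinearEquiv (S := R) (M := .of R A)).symm ≪≫ₗ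
      (Abelian.Ext.linearEquiv₀ (R := R)).symm
  refine ⟨eD.symm.toLinearMap ∘ₗ h.extConnecting C 0 ∘ₗ eA.toLinearMap, fun q => ?_, fun hB => ?_⟩
  · exact (LinearEquiv.map_eq_zero_iff eD.symm).trans (h.extConnecting_mk₀_eq_zero_iff q)
  · rw [subsingleton_extM_iff one_pos] at hB
    exact eD.symm.surjective.comp ((h.extConnecting_surjective hB).comp eA.surjective)

theorem subsingleton_extM_left (h : IsShortExact f g) (hi : 0 < i)
    (hB : Subsingleton (ExtM R (.of R B) C i)) (hD : Subsingleton (ExtM R (.of R D) C (i + 1))) :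
    Subsingleton (ExtM R (.of R A) C i) :=
  have ⟨_, hinj, _⟩ := h.exists_connecting_extM C hi
  (hinj hB).subsingleton

theorem subsingleton_extM_right (h : IsShortExact f g) (hi : 0 < i)
    (hA : Subsingleton (ExtM R (.of R A) C i)) (hB : Subsingleton (ExtM R (.of R B) C (i + 1))) :
    Subsingleton (ExtM R (.of R D) C (i + 1)) :=
  have ⟨_, _, hsurj⟩ := h.exists_connecting_extM C hi
  (hsurj hB).subsingleton

theorem nonempty_extM_linearEquiv_succ (h : IsShortExact f g) (hi : 0 < i)
    (hB : ∀ j, 0 < j → Subsingleton (ExtM R (.of R B) C j)) :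
    Nonempty (ExtM R (.of R A) C i ≃ₗ[R] ExtM R (.of R D) C (i + 1)) :=
  have ⟨δ, hinj, hsurj⟩ := h.exists_connecting_extM C hi
  ⟨.ofBijective δ ⟨hinj (hB i hi), hsurj (hB (i + 1) i.succ_pos)⟩⟩

theorem lcomp_surjective (h : IsShortExact f g) (hD : Subsingleton (ExtM R (.of R D) C 1)) :
    Function.Surjective (LinearMap.lcomp R C f) :=
  have ⟨_, hexact, _⟩ := h.exists_connecting_hom C
  fun q => (hexact q).1 (hD.elim _ _)

theorem subsingleton_extM_one (h : IsShortExact f g) (hB : Subsingleton (ExtM R (.of R B) C 1))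
    (hf : Function.Surjective (LinearMap.lcomp R C f)) :
    Subsingleton (ExtM R (.of R D) C 1) := by
  obtain ⟨δ, hexact, hsurj⟩ := h.exists_connecting_hom C
  refine subsingleton_of_forall_eq 0 fun x => ?_
  obtain ⟨q, rfl⟩ := hsurj hB x
  exact (hexact q).2 (hf q)

end IsShortExact

end Ext

section Biduality

variable {R : Type u} [CommRing R] {A B D : Type u}
  [AddCommGroup A] [AddCommGroup B] [AddCommGroup D] [Module R A] [Module R B] [Module R D]
  {C : ModuleCat.{u} R} {f : A →ₗ[R] B} {g : B →ₗ[R] D}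

theorem bidualityMap_comp (f : A →ₗ[R] B) :
    LinearMap.lcomp R C (LinearMap.lcomp R C f) ∘ₗ bidualityMap R C (.of R A) =
      bidualityMap R C (.of R B) ∘ₗ f :=
  rfl

theorem bidualityMap_injective_of_injective (hf : Function.Injective f)
    (hB : Function.Injective (bidualityMap R C (.of R B))) :
    Function.Injective (bidualityMap R C (.of R A)) :=
  .of_comp (f := LinearMap.lcomp R C (LinearMap.lcomp R C f)) (hB.comp hf)

theorem bidualityMap_bijective_of_retract {s : A →ₗ[R] B} {r : B →ₗ[R] A}
    (h : r ∘ₗ s = LinearMap.id) (hB : Function.Bijective (bidualityMap R C (.of R B))) :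
    Function.Bijective (bidualityMap R C (.of R A)) := by
  refine ⟨bidualityMap_injective_of_injective
    (Function.LeftInverse.injective (LinearMap.congr_fun h)) hB.1, fun η => ?_⟩
  obtain ⟨b, hb⟩ := hB.2 (LinearMap.lcomp R C (LinearMap.lcomp R C s) η)
  refine ⟨r b, ?_⟩
  calc bidualityMap R C (.of R A) (r b)
      = LinearMap.lcomp R C (LinearMap.lcomp R C r) (bidualityMap R C (.of R B) b) := rfl
    _ = LinearMap.lcomp R C (LinearMap.lcomp R C r)
          (LinearMap.lcomp R C (LinearMap.lcomp R C s) η) := by rw [hb]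
    _ = η := LinearMap.ext fun φ =>
      congrArg η (LinearMap.ext fun a => congrArg φ (LinearMap.congr_fun h a))

namespace IsShortExact

theorem dual (h : IsShortExact f g) (hf : Function.Surjective (LinearMap.lcomp R C f)) :
    IsShortExact (LinearMap.lcomp R C g) (LinearMap.lcomp R C f) :=
  ⟨LinearMap.lcomp_injective_of_surjective g h.surjective,
    LinearMap.exact_lcomp_of_exact_of_surjective C h.exact h.surjective, hf⟩

theorem bidualityMap_bijective_mid (h : IsShortExact f g)
    (hf : Function.Surjective (LinearMap.lcomp R C f))
    (hg : Function.Surjective (LinearMap.lcomp R C (LinearMap.lcomp R C g)))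
    (hA : Function.Bijective (bidualityMap R C (.of R A)))
    (hD : Function.Bijective (bidualityMap R C (.of R D))) :
    Function.Bijective (bidualityMap R C (.of R B)) :=
  h.bijective_mid ((h.dual hf).dual hg) (bidualityMap_comp f) (bidualityMap_comp g) hA hD

theorem bidualityMap_bijective_left (h : IsShortExact f g)
    (hf : Function.Surjective (LinearMap.lcomp R C f))
    (hB : Function.Bijective (bidualityMap R C (.of R B)))
    (hD : Function.Injective (bidualityMap R C (.of R D))) :
    Function.Bijective (bidualityMap R C (.of R A)) :=
  LinearMap.bijective_of_bijective_of_injective_of_left_exact f g _ _ _ _ _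
    (bidualityMap_comp f) (bidualityMap_comp g) h.exact
    (LinearMap.exact_lcomp_of_exact_of_surjective C (h.dual hf).exact hf) hB hD h.injective
    (LinearMap.lcomp_injective_of_surjective _ hf)

end IsShortExact

theorem bidualityMap_ring_bijective
    (hC : Function.Bijective fun r : R => (r • LinearMap.id : C →ₗ[R] C)) :
    Function.Bijective (bidualityMap R C (.of R R)) := by
  let e := LinearMap.ringLmapEquivSelf R R C
  have hlcomp : Function.Bijective (LinearMap.lcomp R C e.symm.toLinearMap) :=
    (e.congrLeft C R).bijective
  refine (Function.Bijective.of_comp_iff' hlcomp _).1 ?_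
  convert hC with r
  exact LinearMap.ext fun c => by simp [bidualityMap, e]

end Biduality

namespace IsTotallyCReflexive

variable {R : Type u} [CommRing R] {A B D : Type u}
  [AddCommGroup A] [AddCommGroup B] [AddCommGroup D] [Module R A] [Module R B] [Module R D]
  {C : ModuleCat.{u} R} {f : A →ₗ[R] B} {g : B →ₗ[R] D}

theorem mid (h : IsShortExact f g) (hA : IsTotallyCReflexive R C (.of R A))
    (hD : IsTotallyCReflexive R C (.of R D)) : IsTotallyCReflexive R C (.of R B) := by
  obtain ⟨hAfin, hAbij, hAext, hAext'⟩ := hA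
  obtain ⟨hDfin, hDbij, hDext, hDext'⟩ := hD
  have hf := h.lcomp_surjective (hDext 1 one_pos)
  have hdual := h.dual hf
  exact ⟨h.finite_mid,
    h.bidualityMap_bijective_mid hf (hdual.lcomp_surjective (hAext' 1 one_pos)) hAbij hDbij,
    fun i hi => h.subsingleton_extM_mid hi (hAext i hi) (hDext i hi),
    fun i hi => hdual.subsingleton_extM_mid hi (hDext' i hi) (hAext' i hi)⟩

theorem left [IsNoetherianRing R] (h : IsShortExact f g)
    (hB : IsTotallyCReflexive R C (.of R B)) (hD : IsTotallyCReflexive R C (.of R D)) :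
    IsTotallyCReflexive R C (.of R A) := by
  obtain ⟨hBfin, hBbij, hBext, hBext'⟩ := hB
  obtain ⟨-, hDbij, hDext, hDext'⟩ := hD
  have hf := h.lcomp_surjective (hDext 1 one_pos)
  have hdual := h.dual hf
  have hg : Function.Surjective (LinearMap.lcomp R C (LinearMap.lcomp R C g)) :=
    .of_comp (g := bidualityMap R C (.of R B)) (hDbij.2.comp h.surjective)
  refine ⟨.of_injective f h.injective, h.bidualityMap_bijective_left hf hBbij hDbij.1,
    fun i hi => h.subsingleton_extM_left hi (hBext i hi) (hDext (i + 1) i.succ_pos),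
    fun i hi => ?_⟩
  obtain rfl | ⟨i, rfl⟩ : i = 1 ∨ ∃ j, i = j + 1 + 1 := by
    rcases i with _ | _ | j <;> simp at hi ⊢
  · exact hdual.subsingleton_extM_one (hBext' 1 one_pos) hg
  · exact hdual.subsingleton_extM_right i.succ_pos (hDext' _ i.succ_pos)
      (hBext' _ (i + 1).succ_pos)

theorem of_retract {s : A →ₗ[R] B} {r : B →ₗ[R] A} (h : r ∘ₗ s = LinearMap.id)
    (hB : IsTotallyCReflexive R C (.of R B)) : IsTotallyCReflexive R C (.of R A) := by
  obtain ⟨hBfin, hBbij, hBext, hBext'⟩ := hB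
  have hdual : LinearMap.lcomp R C s ∘ₗ LinearMap.lcomp R C r = LinearMap.id :=
    LinearMap.ext fun φ => LinearMap.ext fun a => congrArg φ (LinearMap.congr_fun h a)
  exact ⟨.of_surjective r (Function.RightInverse.surjective (LinearMap.congr_fun h)),
    bidualityMap_bijective_of_retract h hBbij,
    fun i hi => subsingleton_extM_of_retract h (hBext i hi),
    fun i hi => subsingleton_extM_of_retract hdual (hBext' i hi)⟩

theorem of_linearEquiv (e : A ≃ₗ[R] B) (hB : IsTotallyCReflexive R C (.of R B)) :
    IsTotallyCReflexive R C (.of R A) :=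
  of_retract e.symm_comp hB

theorem dual [IsNoetherianRing R] [Module.Finite R C] (h : IsTotallyCReflexive R C (.of R A)) :
    IsTotallyCReflexive R C (.of R (A →ₗ[R] C)) := by
  obtain ⟨hfin, hbij, hext, hext'⟩ := h
  let e : A ≃ₗ[R] ((A →ₗ[R] C) →ₗ[R] C) := .ofBijective (bidualityMap R C (.of R A)) hbij
  have hlcomp : Function.Bijective (LinearMap.lcomp R C e.toLinearMap) :=
    (e.symm.congrLeft C R).bijective
  have hcomp : LinearMap.lcomp R C e.toLinearMap ∘ bidualityMap R C (.of R (A →ₗ[R] C)) = id := rfl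
  exact ⟨inferInstanceAs (Module.Finite R (A →ₗ[R] C)),
    (Function.Bijective.of_comp_iff' hlcomp _).1 (hcomp ▸ Function.bijective_id), hext',
    fun i hi => subsingleton_extM_of_linearEquiv e.symm (hext i hi)⟩

theorem of_subsingleton [Subsingleton A] : IsTotallyCReflexive R C (.of R A) :=
  have : Subsingleton (ModuleCat.of R A) := ‹_›
  have : Module.Projective R (ModuleCat.of R A) := inferInstance
  have : Module.Projective R (ModuleCat.of R (A →ₗ[R] C)) :=
    inferInstanceAs (Module.Projective R (A →ₗ[R] C))
  ⟨inferInstance, ⟨Function.injective_of_subsingleton _, fun _ => ⟨0, Subsingleton.elim _ _⟩⟩,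
    fun _ hi => subsingleton_extM_of_projective _ C hi,
    fun _ hi => subsingleton_extM_of_projective _ C hi⟩

theorem prod (hA : IsTotallyCReflexive R C (.of R A)) (hB : IsTotallyCReflexive R C (.of R B)) :
    IsTotallyCReflexive R C (.of R (A × B)) :=
  mid .inl_snd hA hB

theorem ring (hC : IsSemidualizing R C) : IsTotallyCReflexive R C (.of R R) :=
  have : Module.Projective R (ModuleCat.of R R) := inferInstanceAs (Module.Projective R R)
  ⟨inferInstanceAs (Module.Finite R R), bidualityMap_ring_bijective hC.2.1,
    fun _ hi => subsingleton_extM_of_projective _ C hi,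
    fun i hi => subsingleton_extM_of_linearEquiv (LinearMap.ringLmapEquivSelf R R C) (hC.2.2 i hi)⟩

theorem pow (hC : IsSemidualizing R C) (n : ℕ) : IsTotallyCReflexive R C (.of R (Fin n → R)) := by
  induction n with
  | zero => exact of_subsingleton
  | succ n ih =>
    exact of_linearEquiv (Fin.consLinearEquiv R fun _ : Fin (n + 1) => R).symm ((ring hC).prod ih)

theorem of_projective (hC : IsSemidualizing R C) [Module.Finite R A] [Module.Projective R A] :
    IsTotallyCReflexive R C (.of R A) :=
  have ⟨n, _, _, _, _, h⟩ := Module.Finite.exists_comp_eq_id_of_projective R A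
  of_retract h (pow hC n)

theorem tensorProduct [IsNoetherianRing R] (hC : IsSemidualizing R C) [Module.Finite R A]
    [Module.Projective R A] : IsTotallyCReflexive R C (.of R (A ⊗[R] C)) :=
  have := hC.1
  have e : A ⊗[R] C ≃ₗ[R] (Module.Dual R A →ₗ[R] C) :=
    (Module.evalEquiv R A).rTensor C ≪≫ₗ dualTensorHomEquiv R (Module.Dual R A) C
  of_linearEquiv e (of_projective hC).dual

end IsTotallyCReflexive

section GCDimension

variable {R : Type u} [CommRing R] {A B D : Type u}
  [AddCommGroup A] [AddCommGroup B] [AddCommGroup D] [Module R A] [Module R B] [Module R D]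
  {C : ModuleCat.{u} R} {f : A →ₗ[R] B} {g : B →ₗ[R] D} {n : ℕ}

namespace gcdimLE

theorem succ_of_isShortExact (h : IsShortExact f g) (hB : IsTotallyCReflexive R C (.of R B))
    (hA : gcdimLE R C n (.of R A)) : gcdimLE R C (n + 1) (.of R D) :=
  ⟨.of R B, .of R A, f, g, h.injective, h.surjective, h.exact.linearMap_ker_eq, hB, hA⟩

theorem exists_isShortExact_of_succ (hD : gcdimLE R C (n + 1) (.of R D)) :
    ∃ (X K : ModuleCat.{u} R) (i : K →ₗ[R] X) (p : X →ₗ[R] D), IsShortExact i p ∧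
      IsTotallyCReflexive R C X ∧ gcdimLE R C n K :=
  have ⟨X, K, i, p, hi, hp, hip, hX, hK⟩ := hD
  ⟨X, K, i, p, ⟨hi, LinearMap.exact_iff.2 hip, hp⟩, hX, hK⟩

theorem of_linearEquiv (e : A ≃ₗ[R] B) (hB : gcdimLE R C n (.of R B)) :
    gcdimLE R C n (.of R A) := by
  cases n with
  | zero => exact IsTotallyCReflexive.of_linearEquiv e hB
  | succ n =>
    obtain ⟨X, K, i, p, h, hX, hK⟩ := hB.exists_isShortExact_of_succ
    exact succ_of_isShortExact (h.linearEquiv_comp e.symm) hX hK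

theorem succ (hA : gcdimLE R C n (.of R A)) : gcdimLE R C (n + 1) (.of R A) := by
  induction n generalizing A with
  | zero =>
    have h : IsShortExact (0 : PUnit.{u + 1} →ₗ[R] A) LinearMap.id :=
      ⟨Function.injective_of_subsingleton _, (LinearMap.exact_zero_iff_injective _ _).2
        Function.injective_id, Function.surjective_id⟩
    exact succ_of_isShortExact h hA IsTotallyCReflexive.of_subsingleton
  | succ n ih =>
    obtain ⟨X, K, i, p, h, hX, hK⟩ := hA.exists_isShortExact_of_succ
    exact succ_of_isShortExact h hX (ih hK)

theorem mono {m : ℕ} (hmn : m ≤ n) (hA : gcdimLE R C m (.of R A)) : gcdimLE R C n (.of R A) :=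
  Nat.le_induction hA (fun _ _ => succ) n hmn

theorem mid_of_projective (hC : IsSemidualizing R C) (h : IsShortExact f g)
    (hA : gcdimLE R C n (.of R A)) [Module.Finite R D] [Module.Projective R D] :
    gcdimLE R C n (.of R B) := by
  have hD : IsTotallyCReflexive R C (.of R D) := .of_projective hC
  cases n with
  | zero => exact IsTotallyCReflexive.mid h hA hD
  | succ n =>
    obtain ⟨X, K, i, p, hp, hX, hK⟩ := hA.exists_isShortExact_of_succ
    obtain ⟨e⟩ := h.nonempty_linearEquiv_prod
    exact of_linearEquiv e (succ_of_isShortExact hp.inl_comp_prodMap (hX.prod hD) hK)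

theorem left [IsNoetherianRing R] (h : IsShortExact f g) (hB : gcdimLE R C n (.of R B))
    (hD : IsTotallyCReflexive R C (.of R D)) : gcdimLE R C n (.of R A) := by
  cases n with
  | zero => exact IsTotallyCReflexive.left h hB hD
  | succ n =>
    obtain ⟨X, K, i, p, hp, hX, hK⟩ := hB.exists_isShortExact_of_succ
    obtain ⟨i', p', h'⟩ := hp.exists_ker_comp h
    have hgp : Function.Surjective (g ∘ₗ p) := h.surjective.comp hp.surjective
    exact succ_of_isShortExact h' (IsTotallyCReflexive.left (.ker_subtype hgp) hX hD) hK

variable [IsNoetherianRing R]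

theorem mid (hC : IsSemidualizing R C) (h : IsShortExact f g) (hA : gcdimLE R C n (.of R A))
    (hD : IsTotallyCReflexive R C (.of R D)) : gcdimLE R C n (.of R B) := by
  induction n generalizing A B D with
  | zero => exact IsTotallyCReflexive.mid h hA hD
  | succ n ih =>
    have : Module.Finite R D := hD.1
    obtain ⟨k, q, hq⟩ := Module.Finite.exists_fin' R D
    have hker := IsShortExact.ker_subtype hq
    have hkerTR := IsTotallyCReflexive.left hker (.pow hC k) hD
    obtain ⟨Y, a, a', hAY, hkerY⟩ := h.exists_pullback hker
    obtain ⟨X, K, i, p, hp, hX, hK⟩ :=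
      (mid_of_projective hC hAY hA).exists_isShortExact_of_succ
    obtain ⟨i', p', hKker⟩ := hp.exists_ker_comp hkerY
    have hXB : Function.Surjective ((LinearMap.fst R B (Fin k → R) ∘ₗ Y.subtype) ∘ₗ p) :=
      hkerY.surjective.comp hp.surjective
    exact succ_of_isShortExact (.ker_subtype hXB) hX (ih hKker hK hkerTR)

theorem of_isShortExact_of_isShortExact {A' B' : Type u} [AddCommGroup A'] [AddCommGroup B']
    [Module R A'] [Module R B'] {f' : A' →ₗ[R] B'} {g' : B' →ₗ[R] D} (hC : IsSemidualizing R C)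
    (h : IsShortExact f g) (h' : IsShortExact f' g') (hB : IsTotallyCReflexive R C (.of R B))
    (hB' : IsTotallyCReflexive R C (.of R B')) (hA : gcdimLE R C n (.of R A)) :
    gcdimLE R C n (.of R A') :=
  have ⟨_, _, _, hAY, hAY'⟩ := h.exists_pullback h'
  left hAY' (mid hC hAY hA hB') hB

theorem succ_iff (hC : IsSemidualizing R C) (h : IsShortExact f g)
    (hB : IsTotallyCReflexive R C (.of R B)) :
    gcdimLE R C (n + 1) (.of R D) ↔ gcdimLE R C n (.of R A) := by
  refine ⟨fun hD => ?_, succ_of_isShortExact h hB⟩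
  obtain ⟨X, K, i, p, hp, hX, hK⟩ := exists_isShortExact_of_succ hD
  exact of_isShortExact_of_isShortExact hC hp h hX hB hK

end gcdimLE

theorem sInf_natCast_image_le_iff {s : Set ℕ} {m : ℕ} :
    sInf ((fun k : ℕ => (k : ℕ∞)) '' s) ≤ m ↔ ∃ k ∈ s, k ≤ m := by
  refine ⟨fun h => ?_, fun ⟨k, hk, hkm⟩ => (sInf_le (Set.mem_image_of_mem _ hk)).trans
    (Nat.cast_le.2 hkm)⟩
  have hs : ((fun k : ℕ => (k : ℕ∞)) '' s).Nonempty :=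
    Set.nonempty_iff_ne_empty.2 fun hs => by simp [hs] at h
  obtain ⟨k, hk, hkm⟩ := csInf_mem hs
  exact ⟨k, hk, Nat.cast_le.1 (hkm.trans_le h)⟩

theorem gcdim_le_iff : gcdim R C (.of R A) ≤ n ↔ gcdimLE R C n (.of R A) :=
  sInf_natCast_image_le_iff.trans ⟨fun ⟨_, hm, hmn⟩ => gcdimLE.mono hmn hm, fun h => ⟨n, h, le_rfl⟩⟩

theorem gcdim_eq_of_forall_iff
    (h : ∀ n, gcdimLE R C n (.of R A) ↔ gcdimLE R C n (.of R B)) :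
    gcdim R C (.of R A) = gcdim R C (.of R B) :=
  WithTop.eq_of_forall_le_coe_iff fun n => by
    exact gcdim_le_iff.trans ((h n).trans gcdim_le_iff.symm)

theorem gcdim_congr (e : A ≃ₗ[R] B) : gcdim R C (.of R A) = gcdim R C (.of R B) :=
  gcdim_eq_of_forall_iff fun _ => ⟨.of_linearEquiv e.symm, .of_linearEquiv e⟩

theorem IsShortExact.gcdim_eq_one_add [IsNoetherianRing R] (h : IsShortExact f g)
    (hC : IsSemidualizing R C) (hB : IsTotallyCReflexive R C (.of R B))
    (hD : ¬ IsTotallyCReflexive R C (.of R D)) :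
    gcdim R C (.of R D) = 1 + gcdim R C (.of R A) := by
  refine WithTop.eq_of_forall_le_coe_iff fun n => gcdim_le_iff.trans ?_
  cases n with
  | zero =>
    exact iff_of_false hD (show ¬ 1 + gcdim R C (.of R A) ≤ ((0 : ℕ) : ℕ∞) by simp)
  | succ n =>
    rw [gcdimLE.succ_iff hC h hB, ← gcdim_le_iff, add_comm]
    exact (ENat.add_le_add_iff_right ENat.one_ne_top).symm

theorem IsShortExact.gcdim_eq {A' B' : Type u} [AddCommGroup A'] [AddCommGroup B'] [Module R A']
    [Module R B'] {f' : A' →ₗ[R] B'} {g' : B' →ₗ[R] D} [IsNoetherianRing R]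
    (h : IsShortExact f g) (h' : IsShortExact f' g') (hC : IsSemidualizing R C)
    (hB : IsTotallyCReflexive R C (.of R B)) (hB' : IsTotallyCReflexive R C (.of R B')) :
    gcdim R C (.of R A) = gcdim R C (.of R A') :=
  gcdim_eq_of_forall_iff fun _ => ⟨.of_isShortExact_of_isShortExact hC h h' hB hB',
    .of_isShortExact_of_isShortExact hC h' h hB' hB⟩

theorem zero_lt_and_not_subsingleton_extM_of_rgrade_eq {M : ModuleCat.{u} R}
    (h : rgrade R C M = n) : 0 < n ∧ ¬ Subsingleton (ExtM R M C n) := by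
  obtain ⟨m, hm, hmn⟩ := sInf_natCast_image_le_iff.1 h.le
  have hnm : n ≤ m := Nat.cast_le.1 (h.ge.trans (sInf_le ⟨m, hm, rfl⟩))
  exact le_antisymm hmn hnm ▸ hm

theorem subsingleton_extM_of_lt_rgrade {M : ModuleCat.{u} R} {i : ℕ} (hi : 0 < i)
    (h : i < rgrade R C M) : Subsingleton (ExtM R M C i) := by
  by_contra hM
  exact h.not_ge (sInf_le ⟨i, ⟨hi, hM⟩, rfl⟩)

end GCDimension

section ExtDimension

variable {R : Type u} [CommRing R] {K P M N E : Type u}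
  [AddCommGroup K] [AddCommGroup P] [AddCommGroup M] [AddCommGroup N] [AddCommGroup E]
  [Module R K] [Module R P] [Module R M] [Module R N] [Module R E]
  {C : ModuleCat.{u} R}

theorem subsingleton_dual_of_comp_lcomp_eq_zero {f : K →ₗ[R] P} {δ : (K →ₗ[R] C) →ₗ[R] E}
    (hf : Function.Injective f) (hK : Function.Surjective (bidualityMap R C (.of R K)))
    (hP : Function.Injective (bidualityMap R C (.of R P))) (hδ : Function.Surjective δ)
    (hfδ : δ ∘ₗ LinearMap.lcomp R C f = 0) : Subsingleton (E →ₗ[R] C) := by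
  refine subsingleton_of_forall_eq 0 fun η => (LinearMap.cancel_right hδ).1 ?_
  obtain ⟨k, hk⟩ := hK (η ∘ₗ δ)
  have hfk : bidualityMap R C (.of R P) (f k) = 0 :=
    calc bidualityMap R C (.of R P) (f k)
        = bidualityMap R C (.of R K) k ∘ₗ LinearMap.lcomp R C f := rfl
      _ = η ∘ₗ δ ∘ₗ LinearMap.lcomp R C f := by rw [hk, LinearMap.comp_assoc]
      _ = 0 := by rw [hfδ, LinearMap.comp_zero]
  have hk_zero : k = 0 := hf (hP (by rw [hfk, map_zero, map_zero]))
  rw [← hk, hk_zero, map_zero, LinearMap.zero_comp]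

theorem IsTotallyCReflexive.of_coker_dual [IsNoetherianRing R] [Module.Finite R C]
    {g : P →ₗ[R] K} {φ : (P →ₗ[R] C) →ₗ[R] N}
    (hφ : IsShortExact (LinearMap.lcomp R C g) φ)
    (hK : Function.Injective (bidualityMap R C (.of R K)))
    (hP : IsTotallyCReflexive R C (.of R P)) (hN : IsTotallyCReflexive R C (.of R N)) :
    IsTotallyCReflexive R C (.of R K) := by
  have hsurj : Function.Surjective (bidualityMap R C (.of R K)) := fun η => by
    obtain ⟨ξ, rfl⟩ := hφ.lcomp_surjective (hN.2.2.1 1 one_pos) η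
    obtain ⟨p, rfl⟩ := hP.2.1.2 ξ
    exact ⟨g p, rfl⟩
  exact of_linearEquiv (.ofBijective (bidualityMap R C (.of R K)) ⟨hK, hsurj⟩)
    (left hφ hP.dual hN).dual

namespace IsShortExact

variable [IsNoetherianRing R] {ι : K →ₗ[R] P} {π : P →ₗ[R] M} {φ : (P →ₗ[R] C) →ₗ[R] N}

theorem gcdim_extM_one (h : IsShortExact ι π) (hC : IsSemidualizing R C)
    (hP : IsTotallyCReflexive R C (.of R P)) (hφ : IsShortExact (LinearMap.lcomp R C π) φ)
    (hne : ¬ Subsingleton (ExtM R (.of R M) C 1)) (hK : IsTotallyCReflexive R C (.of R K)) :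
    gcdim R C (ExtM R (.of R M) C 1) = 1 + gcdim R C (.of R N) := by
  have := hC.1
  obtain ⟨δ, hδ, hδ_surj⟩ := h.exists_connecting_hom C
  replace hδ_surj := hδ_surj (hP.2.2.1 1 one_pos)
  have hrange : IsShortExact (LinearMap.lcomp R C π) (LinearMap.lcomp R C ι).rangeRestrict :=
    .rangeRestrict hφ.injective
      (LinearMap.exact_lcomp_of_exact_of_surjective C h.exact h.surjective)
  obtain ⟨e⟩ := hφ.nonempty_linearEquiv_coker hrange
  have hExt : ¬ IsTotallyCReflexive R C (ExtM R (.of R M) C 1) := fun hE => by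
    have := subsingleton_dual_of_comp_lcomp_eq_zero h.injective hK.2.1.2 hP.2.1.1 hδ_surj
      hδ.linearMap_comp_eq_zero
    exact hne hE.2.1.1.subsingleton
  rw [gcdim_congr e]
  exact (range_subtype hδ hδ_surj).gcdim_eq_one_add hC hK.dual hExt

theorem gcdim_extM_succ {n : ℕ} (h : IsShortExact ι π) (hC : IsSemidualizing R C)
    (hP : IsTotallyCReflexive R C (.of R P)) (hφ : IsShortExact (LinearMap.lcomp R C π) φ)
    (hvanish : ∀ i, 0 < i → i ≤ n → Subsingleton (ExtM R (.of R M) C i))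
    (hne : ¬ Subsingleton (ExtM R (.of R M) C (n + 1))) (hM : gcdimLE R C (n + 1) (.of R M)) :
    gcdim R C (ExtM R (.of R M) C (n + 1)) = (n + 1 : ℕ) + gcdim R C (.of R N) := by
  induction n generalizing K P M N with
  | zero => simpa using h.gcdim_extM_one hC hP hφ hne ((gcdimLE.succ_iff hC h hP).1 hM)
  | succ n ih =>
    have := hC.1
    have hK : gcdimLE R C (n + 1) (.of R K) := (gcdimLE.succ_iff hC h hP).1 hM
    have : Module.Finite R P := hP.1
    have : Module.Finite R K := .of_injective ι h.injective
    have shift (i : ℕ) (hi : 0 < i) := h.nonempty_extM_linearEquiv_succ hi hP.2.2.1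
    have hneK : ¬ Subsingleton (ExtM R (.of R K) C (n + 1)) := fun hs =>
      have ⟨e⟩ := shift (n + 1) n.succ_pos
      hne e.symm.toEquiv.subsingleton
    have hvanishK (i : ℕ) (hi : 0 < i) (hin : i ≤ n) : Subsingleton (ExtM R (.of R K) C i) :=
      have ⟨e⟩ := shift i hi
      have := hvanish (i + 1) i.succ_pos (Nat.succ_le_succ hin)
      e.toEquiv.subsingleton
    obtain ⟨k, q, hq⟩ := Module.Finite.exists_fin' R K
    have hQ : IsTotallyCReflexive R C (.of R (Fin k → R)) := .pow hC k
    have hcoker := coker (f := LinearMap.lcomp R C q) (LinearMap.lcomp_injective_of_surjective q hq)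
    have hcokerTR : ¬ IsTotallyCReflexive R C (.of R
        (((Fin k → R) →ₗ[R] C) ⧸ LinearMap.range (LinearMap.lcomp R C q))) := fun hN =>
      hneK ((IsTotallyCReflexive.of_coker_dual hcoker
        (bidualityMap_injective_of_injective h.injective hP.2.1.1) hQ hN).2.2.1 _ n.succ_pos)
    obtain ⟨eExt⟩ := shift (n + 1) n.succ_pos
    obtain ⟨eN⟩ := hφ.nonempty_linearEquiv_coker
      (h.dual (h.lcomp_surjective (hvanish 1 one_pos (Nat.le_add_left 1 n))))
    calc gcdim R C (ExtM R (.of R M) C (n + 1 + 1))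
        = gcdim R C (ExtM R (.of R K) C (n + 1)) := gcdim_congr eExt.symm
      _ = (n + 1 : ℕ) + gcdim R C (.of R
            (((Fin k → R) →ₗ[R] C) ⧸ LinearMap.range (LinearMap.lcomp R C q))) :=
        ih (ker_subtype hq) hQ hcoker hvanishK hneK hK
      _ = (n + 1 : ℕ) + (1 + gcdim R C (.of R (K →ₗ[R] C))) := by
        rw [hcoker.gcdim_eq_one_add hC hQ.dual hcokerTR]
      _ = (n + 1 + 1 : ℕ) + gcdim R C (.of R N) := by
        rw [gcdim_congr eN, ← add_assoc, ← Nat.cast_add_one]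

end IsShortExact

end ExtDimension

section TensorProduct

variable {R : Type u} [CommRing R]

theorem lTensor_range_subtype_injective {A B D : Type*} (T : Type*)
    [AddCommGroup A] [AddCommGroup B] [AddCommGroup D] [AddCommGroup T]
    [Module R A] [Module R B] [Module R D] [Module R T]
    {f : A →ₗ[R] B} {g : B →ₗ[R] D} (hfg : g ∘ₗ f = 0)
    (h : Function.Exact (f.lTensor T) (g.lTensor T)) :
    Function.Injective ((LinearMap.range g).subtype.lTensor T) := by
  refine (injective_iff_map_eq_zero _).2 fun z hz => ?_
  obtain ⟨y, rfl⟩ := LinearMap.lTensor_surjective T g.surjective_rangeRestrict z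
  rw [← LinearMap.lTensor_comp_apply, LinearMap.subtype_comp_codRestrict] at hz
  obtain ⟨x, rfl⟩ := (h y).1 hz
  have hzero : g.rangeRestrict ∘ₗ f = 0 := by
    ext a
    exact LinearMap.congr_fun hfg a
  rw [← LinearMap.lTensor_comp_apply, hzero, LinearMap.lTensor_zero, LinearMap.zero_apply]

theorem exists_flat_lTensor_injective_of_subsingleton_torM {T C : ModuleCat.{u} R}
    (h : Subsingleton (TorM R T C 1)) :
    ∃ (P : ModuleCat.{u} R) (K : Submodule R P) (ε : P →ₗ[R] C), Module.Flat R P ∧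
      IsShortExact K.subtype ε ∧ Function.Injective (K.subtype.lTensor T) := by
  let P := ProjectiveResolution.of C
  let F := (MonoidalCategory.tensoringLeft (ModuleCat.{u} R)).obj T
  let FP := (F.mapHomologicalComplex (ComplexShape.down ℕ)).obj P.complex
  have hexact : FP.ExactAt 1 :=
    FP.exactAt_iff_isZero_homology 1 |>.2
      ((ModuleCat.isZero_of_subsingleton (TorM R T C 1)).of_iso (P.isoLeftDerivedObj F 1).symm)
  rw [FP.exactAt_iff' 2 1 0 (by simp) (by simp),
    ShortComplex.ShortExact.moduleCat_exact_iff_function_exact] at hexact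
  have hε : Function.Exact (P.complex.d 1 0).hom (P.π.f 0).hom :=
    (ShortComplex.ShortExact.moduleCat_exact_iff_function_exact _).1 P.exact₀
  have hε_surj : Function.Surjective (P.π.f 0).hom :=
    (ModuleCat.epi_iff_surjective _).1 inferInstance
  have : Module.Projective R (P.complex.X 0) := (IsProjective.iff_projective _).2 (P.projective 0)
  exact ⟨P.complex.X 0, LinearMap.range (P.complex.d 1 0).hom, (P.π.f 0).hom, inferInstance,
    .range_subtype hε hε_surj,
    lTensor_range_subtype_injective T (ModuleCat.hom_ext_iff.1 (P.complex.d_comp_d 2 1 0)) hexact⟩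

namespace IsShortExact

variable {L Q T K P C : Type*}
  [AddCommGroup L] [AddCommGroup Q] [AddCommGroup T]
  [AddCommGroup K] [AddCommGroup P] [AddCommGroup C]
  [Module R L] [Module R Q] [Module R T] [Module R K] [Module R P] [Module R C]
  {l : L →ₗ[R] Q} {q : Q →ₗ[R] T} {i : K →ₗ[R] P} {ε : P →ₗ[R] C}

/-- `Tor₁(T, C)` is balanced: its vanishing, computed from a flat presentation of `C`, may be used
on a presentation of `T`. -/
theorem rTensor_injective (h : IsShortExact l q) (h' : IsShortExact i ε) [Module.Flat R P]
    (hi : Function.Injective (i.lTensor T)) : Function.Injective (l.rTensor C) := by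
  refine (injective_iff_map_eq_zero _).2 fun x hx => ?_
  obtain ⟨y, rfl⟩ := LinearMap.lTensor_surjective L h'.surjective x
  rw [← LinearMap.comp_apply, LinearMap.rTensor_comp_lTensor,
    ← LinearMap.lTensor_comp_rTensor, LinearMap.comp_apply] at hx
  obtain ⟨z, hz⟩ := (lTensor_exact Q h'.exact h'.surjective _).1 hx
  have hqz : q.rTensor K z = 0 := hi <| by
    rw [map_zero, ← LinearMap.comp_apply, LinearMap.lTensor_comp_rTensor,
      ← LinearMap.rTensor_comp_lTensor, LinearMap.comp_apply, hz]
    exact (rTensor_exact P h.exact h.surjective _).2 ⟨y, rfl⟩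
  obtain ⟨w, rfl⟩ := (rTensor_exact K h.exact h.surjective z).1 hqz
  rw [← LinearMap.comp_apply, LinearMap.lTensor_comp_rTensor,
    ← LinearMap.rTensor_comp_lTensor, LinearMap.comp_apply] at hz
  rw [← Module.Flat.rTensor_preserves_injective_linearMap l h.injective hz]
  exact (lTensor_exact L h'.exact h'.surjective _).2 ⟨w, rfl⟩

theorem rTensor (h : IsShortExact l q) (hl : Function.Injective (l.rTensor C)) :
    IsShortExact (l.rTensor C) (q.rTensor C) :=
  ⟨hl, rTensor_exact C h.exact h.surjective, LinearMap.rTensor_surjective C h.surjective⟩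

end IsShortExact

theorem exact_lcomp_rTensor_comp_dualTensorHomEquiv_symm {P₁ P₀ T : Type*} (C : Type*)
    [AddCommGroup P₁] [AddCommGroup P₀] [AddCommGroup T] [AddCommGroup C]
    [Module R P₁] [Module R P₀] [Module R T] [Module R C]
    [Module.Finite R P₁] [Module.Projective R P₁] [Module.Finite R P₀] [Module.Projective R P₀]
    {d : P₁ →ₗ[R] P₀} {t : Module.Dual R P₁ →ₗ[R] T}
    (h : Function.Exact d.dualMap t) (ht : Function.Surjective t) :
    Function.Exact (LinearMap.lcomp R C d)
      (t.rTensor C ∘ₗ (dualTensorHomEquiv R P₁ C).symm.toLinearMap) :=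
  Function.Exact.of_ladder_linearEquiv_of_exact
    (e₁ := dualTensorHomEquiv R P₀ C) (e₂ := dualTensorHomEquiv R P₁ C) (e₃ := .refl R _)
    (dualTensorHom_comp_rTensor_dualMap d).symm (by ext; simp)
    (rTensor_exact C h ht)

end TensorProduct

section Transpose

variable {R : Type u} [CommRing R] [IsNoetherianRing R] {P₁ P₀ T Q L : Type u} {C : ModuleCat.{u} R}
  [AddCommGroup P₁] [AddCommGroup P₀] [AddCommGroup T] [AddCommGroup Q] [AddCommGroup L]
  [Module R P₁] [Module R P₀] [Module R T] [Module R Q] [Module R L]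
  [Module.Finite R P₁] [Module.Projective R P₁] [Module.Finite R P₀] [Module.Projective R P₀]
  [Module.Finite R Q] [Module.Projective R Q]

theorem gcdim_tensorProduct_eq_gcdim_range_lcomp (hC : IsSemidualizing R C)
    {d : P₁ →ₗ[R] P₀} {t : Module.Dual R P₁ →ₗ[R] T} {l : L →ₗ[R] Q} {q : Q →ₗ[R] T}
    (hd : Function.Exact d.dualMap t) (ht : Function.Surjective t) (h : IsShortExact l q)
    (hTor : Subsingleton (TorM R (.of R T) C 1)) :
    gcdim R C (.of R (L ⊗[R] C)) = gcdim R C (.of R (LinearMap.range (LinearMap.lcomp R C d))) := by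
  have := hC.1
  obtain ⟨P, K, ε, hP, hε, hK⟩ := exists_flat_lTensor_injective_of_subsingleton_torM hTor
  have hLC : IsShortExact (l.rTensor C) (q.rTensor C) := h.rTensor (h.rTensor_injective hε hK)
  have hrange : IsShortExact (LinearMap.range (LinearMap.lcomp R C d)).subtype
      (t.rTensor C ∘ₗ (dualTensorHomEquiv R P₁ C).symm.toLinearMap) :=
    .range_subtype (exact_lcomp_rTensor_comp_dualTensorHomEquiv_symm C hd ht)
      ((LinearMap.rTensor_surjective C ht).comp (LinearEquiv.surjective _))
  have hP₁ : IsTotallyCReflexive R C (.of R (P₁ →ₗ[R] C)) :=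
    (IsTotallyCReflexive.of_projective hC).dual
  exact hLC.gcdim_eq hrange hC (.tensorProduct hC) hP₁

end Transpose

theorem statement6_general {R : Type u} [CommRing R] [IsNoetherianRing R]
    {C M T L P₁ P₀ Q : ModuleCat.{u} R} {n : ℕ} (hC : IsSemidualizing R C)
    (hred : IsReducedGCPerfect R C M) (hdim : gcdim R C M = n)
    [Module.Finite R P₁] [Module.Projective R P₁] [Module.Finite R P₀] [Module.Projective R P₀]
    [Module.Finite R Q] [Module.Projective R Q]
    {d : P₁ →ₗ[R] P₀} {π : P₀ →ₗ[R] M} (hπ : Function.Surjective π)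
    (hd : LinearMap.range d = LinearMap.ker π)
    (eT : T ≃ₗ[R] Module.Dual R P₁ ⧸ LinearMap.range d.dualMap)
    {q : Q →ₗ[R] T} (hq : Function.Surjective q) (eL : L ≃ₗ[R] LinearMap.ker q)
    (hTor : Subsingleton (TorM R T C 1)) :
    gcdim R C M + gcdim R C (.of R (L ⊗[R] C)) = gcdim R C (ExtM R M C n) := by
  obtain ⟨hn, hne⟩ := zero_lt_and_not_subsingleton_extM_of_rgrade_eq (hred.2.trans hdim)
  obtain ⟨k, rfl⟩ := Nat.exists_eq_succ_of_ne_zero hn.ne'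
  have hdual : IsShortExact (LinearMap.lcomp R C π) (LinearMap.lcomp R C d).rangeRestrict :=
    .rangeRestrict (LinearMap.lcomp_injective_of_surjective π hπ)
      (LinearMap.exact_lcomp_of_exact_of_surjective C (LinearMap.exact_iff.2 hd.symm) hπ)
  have hvanish (i : ℕ) (hi : 0 < i) (hik : i ≤ k) : Subsingleton (ExtM R M C i) :=
    subsingleton_extM_of_lt_rgrade hi (by rw [hred.2, hdim]; exact_mod_cast Nat.lt_succ_of_le hik)
  have hM : gcdimLE R C (k + 1) M := gcdim_le_iff.1 hdim.le
  have hT : Function.Exact d.dualMap (eT.symm.toLinearMap ∘ₗ (LinearMap.range d.dualMap).mkQ) :=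
    LinearMap.exact_iff.2 (by rw [LinearEquiv.ker_comp, Submodule.ker_mkQ])
  rw [hdim, (IsShortExact.ker_subtype hπ).gcdim_extM_succ hC (.of_projective hC) hdual hvanish hne
    hM, gcdim_tensorProduct_eq_gcdim_range_lcomp hC hT
      (eT.symm.surjective.comp (Submodule.mkQ_surjective _))
      ((IsShortExact.ker_subtype hq).comp_linearEquiv eL) hTor]

/-- if `M` is reduced `G_C`-perfect of `G_C`-dimension `n` and
`Tor_1^R(Tr(M), C) = 0`, then
`G_C-dim(M) + G_C-dim(λM ⊗ C) = G_C-dim(Ext_R^n(M,C))` in `ℕ∞`. -/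
theorem statement6 [IsNoetherianRing R] (hsp : IsSemiperfectRing R)
    (C : ModuleCat.{u} R) (hC : IsSemidualizing R C)
    (M : ModuleCat.{u} R) (hMfin : Module.Finite R ↥M)
    (n : ℕ) (hred : IsReducedGCPerfect R C M) (hdim : gcdim R C M = n)
    (htor : ∀ T : ModuleCat.{u} R, IsTranspose R M T →
      Subsingleton (TorM R T C 1)) :
    ∀ L : ModuleCat.{u} R, IsLambda R M L →
      gcdim R C M + gcdim R C (ModuleCat.of R (↥L ⊗[R] ↥C)) =
        gcdim R C (ExtM R M C n) := by
  rintro L ⟨T, hT, Q, q, hQ, ⟨hQproj, hq, -⟩, ⟨eL⟩⟩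
  have hTor := htor T hT
  obtain ⟨P₁, P₀, d, π, ⟨hP₁, hP₀, ⟨hP₀proj, hπ, -⟩, hd, hP₁proj, -⟩, ⟨eT⟩⟩ := hT
  exact statement6_general hC hred hdim hπ hd eT hq eL hTor

end
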